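/- arXiv:math/0509368 — 2 statements merged into one kernel-verified Lean document; each statement's English description precedes it below -/
import Mathlib

section
/- For every μ, ν ∈ ℂ, the bracket defined on the vector space (R⊗ġ) ⊕ K ⊕ D by the given formulas is well defined (compatible with the relations defining K), is alternating, and satisfies the Jacobi identity; hence the full toroidal Lie algebra g(μ,ν) is a Lie algebra over ℂ. -/
/-!
STATEMENT 0: For every μ, ν ∈ ℂ, the bracket defined on the vector space
(R⊗ġ) ⊕ K ⊕ D by the given formulas is well defined, alternating and satisfies
the Jacobi identity; hence the full toroidal Lie algebra g(μ,ν) is a Lie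
algebra over ℂ.

We formalize this as: there exists a Lie algebra structure (a type `G` with
`LieRing`/`LieAlgebra ℂ` instances) on the vector space
(R⊗ġ) ⊕ (Ω¹_R/d(R)) ⊕ D (pinned down by a linear equivalence `e` to the
concrete model), in which the brackets of the distinguished generators
t^r⊗x, t^r k_p, t^r d_p are given exactly by the formulas of the paper.
-/

namespace ToroidalPaper

/-- multi-indices r ∈ ℤ^{N+1} -/
abbrev Idx (N : ℕ) := Fin (N + 1) → ℤ

/-- The model for the 1-forms Ω¹_R: the free module on k₀,…,k_N over R,
written in the monomial basis t^r k_p. -/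
abbrev OmegaR (N : ℕ) := Idx N →₀ (Fin (N + 1) → ℂ)

/-- The subspace d(R) ⊆ Ω¹_R of exact forms: d(t^r) = Σ_p r_p t^r k_p. -/
noncomputable def dR (N : ℕ) : Submodule ℂ (OmegaR N) :=
  Submodule.span ℂ {w : OmegaR N | ∃ r : Idx N, w = Finsupp.single r fun p => (r p : ℂ)}

/-- K = Ω¹_R / d(R) -/
abbrev Kmod (N : ℕ) := OmegaR N ⧸ dR N

variable (N : ℕ) (g : Type) [LieRing g] [LieAlgebra ℂ g]

/-- The underlying vector space of the full toroidal Lie algebra: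
(R ⊗ ġ) ⊕ K ⊕ D, where R ⊗ ġ is modeled as `Idx N →₀ g` (coefficient of t^r)
and D as `Idx N →₀ (Fin (N+1) → ℂ)` (coefficients of t^r d_p). -/
abbrev Carrier := (Idx N →₀ g) × Kmod N × (Idx N →₀ (Fin (N + 1) → ℂ))

/-- A realization of the vector space (R⊗ġ) ⊕ K ⊕ D as a Lie algebra:
a Lie algebra `G` together with a linear identification with the model. -/
structure Tor where
  G : Type
  [instLieRing : LieRing G]
  [instLieAlgebra : LieAlgebra ℂ G]
  e : G ≃ₗ[ℂ] Carrier N g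

attribute [instance] Tor.instLieRing Tor.instLieAlgebra

namespace Tor

variable {N g}
variable (T : Tor N g)

/-- the element t^r ⊗ x of R ⊗ ġ -/
noncomputable def tg (r : Idx N) (x : g) : T.G := T.e.symm (Finsupp.single r x, 0, 0)

/-- the element t^r k_p of K -/
noncomputable def k (r : Idx N) (p : Fin (N + 1)) : T.G :=
  T.e.symm (0, Submodule.Quotient.mk (p := dR N) (Finsupp.single r (Pi.single p 1)), 0)

/-- the element t^r d_p of D -/
noncomputable def d (r : Idx N) (p : Fin (N + 1)) : T.G :=
  T.e.symm (0, 0, Finsupp.single r (Pi.single p 1))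

/-- t^m · d(t^r) = Σ_p r_p t^{r+m} k_p -/
noncomputable def kSum (r m : Idx N) : T.G := ∑ p : Fin (N + 1), (r p : ℂ) • T.k (r + m) p

/-- The bracket relations of the full toroidal Lie algebra g(μ,ν). -/
structure IsToroidal (B : g →ₗ[ℂ] g →ₗ[ℂ] ℂ) (μ ν : ℂ) : Prop where
  br_gg : ∀ (r m : Idx N) (x y : g),
    ⁅T.tg r x, T.tg m y⁆ = T.tg (r + m) ⁅x, y⁆ + B x y • T.kSum r m
  br_kg : ∀ (r m : Idx N) (p : Fin (N + 1)) (x : g), ⁅T.k r p, T.tg m x⁆ = 0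
  br_kk : ∀ (r m : Idx N) (p q : Fin (N + 1)), ⁅T.k r p, T.k m q⁆ = 0
  br_dg : ∀ (r m : Idx N) (a : Fin (N + 1)) (x : g),
    ⁅T.d r a, T.tg m x⁆ = (m a : ℂ) • T.tg (r + m) x
  br_dk : ∀ (r m : Idx N) (a b : Fin (N + 1)),
    ⁅T.d r a, T.k m b⁆ = (m a : ℂ) • T.k (r + m) b
      + (if a = b then (1 : ℂ) else 0) • T.kSum r m
  br_dd : ∀ (r m : Idx N) (a b : Fin (N + 1)),
    ⁅T.d r a, T.d m b⁆ = (m a : ℂ) • T.d (r + m) b - (r b : ℂ) • T.d (r + m) a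
      + (μ * (m a : ℂ) * (r b : ℂ) + ν * (r a : ℂ) * (m b : ℂ)) •
          (∑ p : Fin (N + 1), (m p : ℂ) • T.k (r + m) p)

end Tor

/-- The Lie ring structure defined by a bilinear map that is alternating and satisfies the
Leibniz form of the Jacobi identity. -/
abbrev lieRingOfBilin {M : Type*} [AddCommGroup M] [Module ℂ M] (β : M →ₗ[ℂ] M →ₗ[ℂ] M)
    (self : ∀ x, β x x = 0) (leibniz : ∀ x y z, β x (β y z) = β (β x y) z + β y (β x z)) :
    LieRing M where
  bracket x y := β x y
  add_lie x y z := by simp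
  lie_add x y z := by simp
  lie_self := self
  leibniz_lie := leibniz

/-- Bilinear extension of a family of bilinear maps given on monomials. -/
noncomputable def monomialBilin {ι V W U : Type*} [AddCommGroup V] [Module ℂ V]
    [AddCommGroup W] [Module ℂ W] [AddCommGroup U] [Module ℂ U]
    (f : ι → ι → V →ₗ[ℂ] W →ₗ[ℂ] U) : (ι →₀ V) →ₗ[ℂ] (ι →₀ W) →ₗ[ℂ] U :=
  Finsupp.lsum ℂ fun r => LinearMap.flip (Finsupp.lsum ℂ fun m => (f r m).flip)

@[simp]
theorem monomialBilin_single {ι V W U : Type*} [AddCommGroup V] [Module ℂ V]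
    [AddCommGroup W] [Module ℂ W] [AddCommGroup U] [Module ℂ U]
    (f : ι → ι → V →ₗ[ℂ] W →ₗ[ℂ] U) (r m : ι) (v : V) (w : W) :
    monomialBilin f (Finsupp.single r v) (Finsupp.single m w) = f r m v w := by
  simp [monomialBilin]

section Bracket

variable {N : ℕ}

/-- The complex vector underlying a multi-index. -/
def Idx.vec (r : Idx N) : Fin (N + 1) → ℂ := fun p => (r p : ℂ)

theorem Idx.vec_add (r m : Idx N) : (r + m).vec = r.vec + m.vec := by
  ext p; simp [Idx.vec]

/-- The class in `K` of `t^r Σ_p w_p k_p`. -/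
noncomputable def kMono (r : Idx N) : (Fin (N + 1) → ℂ) →ₗ[ℂ] Kmod N :=
  (dR N).mkQ ∘ₗ Finsupp.lsingle r

theorem kMono_vec (r : Idx N) : kMono r r.vec = 0 :=
  (Submodule.Quotient.mk_eq_zero _).2 (Submodule.subset_span ⟨r, rfl⟩)

/-- Two coefficient vectors that differ by a multiple of the exponent have the same class. -/
theorem kMono_congr {r r' : Idx N} (hr : r = r') {v w : Fin (N + 1) → ℂ} (c : ℂ)
    (h : v = w + c • r.vec) : kMono r v = kMono r' w := by
  subst hr; simp [h, kMono_vec]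

/-- `[t^r u, t^m v]` for vector fields, without the `K`-component. -/
noncomputable def vectBracket : (Idx N →₀ (Fin (N + 1) → ℂ)) →ₗ[ℂ]
    (Idx N →₀ (Fin (N + 1) → ℂ)) →ₗ[ℂ] (Idx N →₀ (Fin (N + 1) → ℂ)) :=
  monomialBilin fun r m => LinearMap.mk₂ ℂ
    (fun u v => Finsupp.single (r + m) ((m.vec ⬝ᵥ u) • v - (r.vec ⬝ᵥ v) • u))
    (by intros; rw [← Finsupp.single_add]; congr 1; simp only [dotProduct_add]; module)
    (by intros; rw [Finsupp.smul_single]; congr 1; simp only [dotProduct_smul, smul_eq_mul]; module)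
    (by intros; rw [← Finsupp.single_add]; congr 1; simp only [dotProduct_add]; module)
    (by intros; rw [Finsupp.smul_single]; congr 1; simp only [dotProduct_smul, smul_eq_mul]; module)

/-- The `K`-valued cocycle on vector fields. -/
noncomputable def vectCocycle (μ ν : ℂ) : (Idx N →₀ (Fin (N + 1) → ℂ)) →ₗ[ℂ]
    (Idx N →₀ (Fin (N + 1) → ℂ)) →ₗ[ℂ] Kmod N :=
  monomialBilin fun r m => LinearMap.mk₂ ℂ
    (fun u v => (μ * (m.vec ⬝ᵥ u) * (r.vec ⬝ᵥ v) + ν * (r.vec ⬝ᵥ u) * (m.vec ⬝ᵥ v)) •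
      kMono (r + m) m.vec)
    (by intros; simp only [dotProduct_add]; module)
    (by intros; simp only [dotProduct_smul, smul_eq_mul]; module)
    (by intros; simp only [dotProduct_add]; module)
    (by intros; simp only [dotProduct_smul, smul_eq_mul]; module)

/-- The Lie derivative of one-forms along vector fields, with values in `K`. -/
noncomputable def lieDerivForm : OmegaR N →ₗ[ℂ] (Idx N →₀ (Fin (N + 1) → ℂ)) →ₗ[ℂ] Kmod N :=
  monomialBilin fun m r => LinearMap.mk₂ ℂ
    (fun w u => kMono (r + m) ((m.vec ⬝ᵥ u) • w + (u ⬝ᵥ w) • r.vec))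
    (by intros; rw [← map_add]; congr 1; simp only [dotProduct_add]; module)
    (by intros; rw [← map_smul]; congr 1; simp only [dotProduct_smul, smul_eq_mul]; module)
    (by intros; rw [← map_add]; congr 1; simp only [dotProduct_add, add_dotProduct]; module)
    (by
      intros; rw [← map_smul]; congr 1
      simp only [dotProduct_smul, smul_dotProduct, smul_eq_mul]; module)

theorem dR_le_ker_lieDerivForm : dR N ≤ LinearMap.ker (lieDerivForm (N := N)) := by
  refine Submodule.span_le.2 ?_
  rintro _ ⟨m, rfl⟩
  refine LinearMap.mem_ker.2 (Finsupp.lhom_ext fun r u => ?_)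
  simp only [lieDerivForm, monomialBilin_single, LinearMap.mk₂_apply, LinearMap.zero_apply]
  change kMono (r + m) ((m.vec ⬝ᵥ u) • m.vec + (u ⬝ᵥ m.vec) • r.vec) = 0
  rw [← map_zero (kMono (r + m))]
  refine kMono_congr rfl (m.vec ⬝ᵥ u) ?_
  rw [Idx.vec_add, dotProduct_comm u]
  module

/-- The action of vector fields on `K`, with the element of `K` as first argument. -/
noncomputable def lieDeriv : Kmod N →ₗ[ℂ] (Idx N →₀ (Fin (N + 1) → ℂ)) →ₗ[ℂ] Kmod N :=
  (dR N).liftQ lieDerivForm dR_le_ker_lieDerivForm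

variable {g : Type} [LieRing g] [LieAlgebra ℂ g]

/-- The pointwise bracket on `R ⊗ g`. -/
noncomputable def loopBracket : (Idx N →₀ g) →ₗ[ℂ] (Idx N →₀ g) →ₗ[ℂ] (Idx N →₀ g) :=
  monomialBilin fun r m => (LieModule.toEnd ℂ g g : g →ₗ[ℂ] g →ₗ[ℂ] g).compr₂
    (Finsupp.lsingle (r + m))

/-- The `K`-valued cocycle `B(x, y) t^m d(t^r)` on `R ⊗ g`. -/
noncomputable def loopCocycle (B : g →ₗ[ℂ] g →ₗ[ℂ] ℂ) :
    (Idx N →₀ g) →ₗ[ℂ] (Idx N →₀ g) →ₗ[ℂ] Kmod N :=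
  monomialBilin fun r m => B.compr₂ (LinearMap.toSpanSingleton ℂ _ (kMono (r + m) r.vec))

/-- The action of vector fields on `R ⊗ g`. -/
noncomputable def vectLoop :
    (Idx N →₀ (Fin (N + 1) → ℂ)) →ₗ[ℂ] (Idx N →₀ g) →ₗ[ℂ] (Idx N →₀ g) :=
  monomialBilin fun r m => LinearMap.mk₂ ℂ
    (fun u x => Finsupp.single (r + m) ((m.vec ⬝ᵥ u) • x))
    (by intros; rw [← Finsupp.single_add]; congr 1; simp only [dotProduct_add]; module)
    (by intros; rw [Finsupp.smul_single]; congr 1; simp only [dotProduct_smul, smul_eq_mul]; module)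
    (by intros; rw [← Finsupp.single_add]; congr 1; module)
    (by intros; rw [Finsupp.smul_single]; congr 1; module)

/-- The bracket of the full toroidal Lie algebra. -/
noncomputable def torBracket (B : g →ₗ[ℂ] g →ₗ[ℂ] ℂ) (μ ν : ℂ) :
    Carrier N g →ₗ[ℂ] Carrier N g →ₗ[ℂ] Carrier N g :=
  LinearMap.mk₂ ℂ
    (fun X Y =>
      (loopBracket X.1 Y.1 + vectLoop X.2.2 Y.1 - vectLoop Y.2.2 X.1,
        loopCocycle B X.1 Y.1 + lieDeriv Y.2.1 X.2.2 - lieDeriv X.2.1 Y.2.2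
          + vectCocycle μ ν X.2.2 Y.2.2,
        vectBracket X.2.2 Y.2.2))
    (by
      intros
      simp only [Prod.fst_add, Prod.snd_add, map_add, LinearMap.add_apply, Prod.mk_add_mk,
        Prod.mk.injEq, and_true]
      constructor <;> module)
    (by
      intros
      simp only [Prod.smul_fst, Prod.smul_snd, map_smul, LinearMap.smul_apply, Prod.smul_mk,
        Prod.mk.injEq, and_true]
      constructor <;> module)
    (by
      intros
      simp only [Prod.fst_add, Prod.snd_add, map_add, LinearMap.add_apply, Prod.mk_add_mk,
        Prod.mk.injEq, and_true]
      constructor <;> module)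
    (by
      intros
      simp only [Prod.smul_fst, Prod.smul_snd, map_smul, LinearMap.smul_apply, Prod.smul_mk,
        Prod.mk.injEq, and_true]
      constructor <;> module)

variable (N g) in
/-- The element `t^r Σ_p w_p k_p`. -/
noncomputable def kGen (r : Idx N) : (Fin (N + 1) → ℂ) →ₗ[ℂ] Carrier N g :=
  LinearMap.inr ℂ _ _ ∘ₗ LinearMap.inl ℂ _ _ ∘ₗ kMono r

variable (N g) in
/-- The element `t^r Σ_p u_p d_p`. -/
noncomputable def dGen (r : Idx N) : (Fin (N + 1) → ℂ) →ₗ[ℂ] Carrier N g :=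
  LinearMap.inr ℂ _ _ ∘ₗ LinearMap.inr ℂ _ _ ∘ₗ Finsupp.lsingle r

variable (N g) in
/-- The element `t^r ⊗ x`. -/
noncomputable def gGen (r : Idx N) : g →ₗ[ℂ] Carrier N g :=
  LinearMap.inl ℂ _ _ ∘ₗ Finsupp.lsingle r

/-- Every element of the carrier is a sum of homogeneous ones. -/
theorem carrier_induction {P : Carrier N g → Prop} (X : Carrier N g)
    (add : ∀ X Y, P X → P Y → P (X + Y)) (hg : ∀ r x, P (gGen N g r x))
    (hk : ∀ r w, P (kGen N g r w)) (hd : ∀ r u, P (dGen N g r u)) : P X := by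
  have h0 : P 0 := by simpa using hg 0 0
  obtain ⟨a, κ, δ⟩ := X
  have h1 : P (a, 0, 0) := by
    induction a using Finsupp.induction_linear with
    | zero => exact h0
    | add a b ha hb => simpa using add _ _ ha hb
    | single r x => exact hg r x
  have h2 : P (0, κ, 0) := by
    induction κ using Submodule.Quotient.induction_on with
    | H w =>
      induction w using Finsupp.induction_linear with
      | zero => exact h0
      | add a b ha hb => simpa using add _ _ ha hb
      | single r x => exact hk r x
  have h3 : P (0, 0, δ) := by
    induction δ using Finsupp.induction_linear with
    | zero => exact h0
    | add a b ha hb => simpa using add _ _ ha hb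
    | single r x => exact hd r x
  simpa using add _ _ (add _ _ h1 h2) h3

variable (B : g →ₗ[ℂ] g →ₗ[ℂ] ℂ) (μ ν : ℂ) (r m : Idx N) (u v : Fin (N + 1) → ℂ) (x y : g)

theorem lieDeriv_kMono : lieDeriv (kMono m v) (Finsupp.single r u) =
    kMono (r + m) ((m.vec ⬝ᵥ u) • v + (u ⬝ᵥ v) • r.vec) := by
  change lieDerivForm (Finsupp.single m v) (Finsupp.single r u) = _
  simp [lieDerivForm]

theorem torBracket_gg : torBracket B μ ν (gGen N g r x) (gGen N g m y) =
    gGen N g (r + m) ⁅x, y⁆ + B x y • kGen N g (r + m) r.vec := by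
  simp [torBracket, gGen, kGen, loopBracket, loopCocycle]

theorem torBracket_gk : torBracket B μ ν (gGen N g r x) (kGen N g m v) = 0 := by
  simp [torBracket, gGen, kGen]

theorem torBracket_kg : torBracket B μ ν (kGen N g m v) (gGen N g r x) = 0 := by
  simp [torBracket, gGen, kGen]

theorem torBracket_kk : torBracket B μ ν (kGen N g r u) (kGen N g m v) = 0 := by
  simp [torBracket, kGen]

theorem torBracket_dg : torBracket B μ ν (dGen N g r u) (gGen N g m x) =
    (m.vec ⬝ᵥ u) • gGen N g (r + m) x := by
  simp [torBracket, gGen, dGen, vectLoop]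

theorem torBracket_gd : torBracket B μ ν (gGen N g m x) (dGen N g r u) =
    -((m.vec ⬝ᵥ u) • gGen N g (r + m) x) := by
  simp [torBracket, gGen, dGen, vectLoop]

theorem torBracket_dk : torBracket B μ ν (dGen N g r u) (kGen N g m v) =
    kGen N g (r + m) ((m.vec ⬝ᵥ u) • v + (u ⬝ᵥ v) • r.vec) := by
  simp [torBracket, kGen, dGen, lieDeriv_kMono]

theorem torBracket_kd : torBracket B μ ν (kGen N g m v) (dGen N g r u) =
    -kGen N g (r + m) ((m.vec ⬝ᵥ u) • v + (u ⬝ᵥ v) • r.vec) := by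
  simp [torBracket, kGen, dGen, lieDeriv_kMono]

theorem torBracket_dd : torBracket B μ ν (dGen N g r u) (dGen N g m v) =
    dGen N g (r + m) ((m.vec ⬝ᵥ u) • v - (r.vec ⬝ᵥ v) • u) +
      (μ * (m.vec ⬝ᵥ u) * (r.vec ⬝ᵥ v) + ν * (r.vec ⬝ᵥ u) * (m.vec ⬝ᵥ v)) •
        kGen N g (r + m) m.vec := by
  simp [torBracket, kGen, dGen, vectBracket, vectCocycle]

theorem kGen_congr {r r' : Idx N} (hr : r = r') {v w : Fin (N + 1) → ℂ} (c : ℂ)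
    (h : v = w + c • r.vec) : kGen N g r v = kGen N g r' w := by
  simp only [kGen, LinearMap.comp_apply]; rw [kMono_congr hr c h]

theorem torBracket_skew (hB : ∀ x y : g, B x y = B y x) (X Y : Carrier N g) :
    torBracket B μ ν X Y = -torBracket B μ ν Y X := by
  induction X using carrier_induction with
  | add X X' h h' => simp only [map_add, LinearMap.add_apply, h, h', neg_add]
  | hg r x =>
    induction Y using carrier_induction with
    | add Y Y' h h' => simp only [map_add, LinearMap.add_apply, h, h', neg_add]
    | hg m y =>
      rw [torBracket_gg, torBracket_gg, add_comm m r, hB y x, ← lie_skew x y, ← map_smul, ← map_smul,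
        kGen_congr rfl (v := B x y • r.vec) (w := - B x y • m.vec) (B x y)
          (by rw [Idx.vec_add]; module), map_neg]
      simp only [neg_smul, map_neg, map_smul]
      abel
    | hk m v => simp only [torBracket_gk, torBracket_kg, neg_zero]
    | hd m v => simp only [torBracket_gd, torBracket_dg]
  | hk r u =>
    induction Y using carrier_induction with
    | add Y Y' h h' => simp only [map_add, LinearMap.add_apply, h, h', neg_add]
    | hg m y => simp only [torBracket_gk, torBracket_kg, neg_zero]
    | hk m v => simp only [torBracket_kk, neg_zero]
    | hd m v => simp only [torBracket_kd, torBracket_dk]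
  | hd r u =>
    induction Y using carrier_induction with
    | add Y Y' h h' => simp only [map_add, LinearMap.add_apply, h, h', neg_add]
    | hg m y => simp only [torBracket_gd, torBracket_dg, neg_neg]
    | hk m v => simp only [torBracket_kd, torBracket_dk, neg_neg]
    | hd m v =>
      rw [torBracket_dd, torBracket_dd, add_comm m r, ← map_smul, ← map_smul,
        kGen_congr rfl
          (v := (μ * (m.vec ⬝ᵥ u) * (r.vec ⬝ᵥ v) + ν * (r.vec ⬝ᵥ u) * (m.vec ⬝ᵥ v)) • m.vec)
          (w := -(μ * (m.vec ⬝ᵥ u) * (r.vec ⬝ᵥ v) + ν * (r.vec ⬝ᵥ u) * (m.vec ⬝ᵥ v)) • r.vec)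
          (μ * (m.vec ⬝ᵥ u) * (r.vec ⬝ᵥ v) + ν * (r.vec ⬝ᵥ u) * (m.vec ⬝ᵥ v))
          (by rw [Idx.vec_add]; module)]
      simp only [map_sub, map_smul]
      module


theorem torBracket_self (hB : ∀ x y : g, B x y = B y x) (X : Carrier N g) :
    torBracket B μ ν X X = 0 := by
  have h := eq_neg_iff_add_eq_zero.1 (torBracket_skew B μ ν hB X X)
  rw [← two_smul ℂ] at h
  exact (smul_eq_zero.1 h).resolve_left two_ne_zero

theorem kGen_vec_of_add_add (s : Idx N) : kGen N g (r + (m + s)) r.vec =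
    -kGen N g (r + (m + s)) m.vec - kGen N g (r + (m + s)) s.vec := by
  rw [← map_neg, ← map_sub]
  exact kGen_congr rfl 1 (by simp only [Idx.vec_add]; module)

/-- The Leibniz form of the Jacobi identity for three elements. -/
def TorLeibniz (X Y Z : Carrier N g) : Prop :=
  torBracket B μ ν X (torBracket B μ ν Y Z) =
    torBracket B μ ν (torBracket B μ ν X Y) Z + torBracket B μ ν Y (torBracket B μ ν X Z)

variable {B μ ν}

theorem TorLeibniz.swap_left (hB : ∀ x y : g, B x y = B y x) {X Y Z : Carrier N g}
    (h : TorLeibniz B μ ν X Y Z) : TorLeibniz B μ ν Y X Z := by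
  unfold TorLeibniz at *
  rw [torBracket_skew B μ ν hB Y X, h]
  simp only [map_neg, LinearMap.neg_apply]
  abel

theorem TorLeibniz.swap_right (hB : ∀ x y : g, B x y = B y x) {X Y Z : Carrier N g}
    (h : TorLeibniz B μ ν X Y Z) : TorLeibniz B μ ν X Z Y := by
  unfold TorLeibniz at *
  rw [torBracket_skew B μ ν hB Z Y, map_neg, h,
    torBracket_skew B μ ν hB (torBracket B μ ν X Z) Y,
    torBracket_skew B μ ν hB Z (torBracket B μ ν X Y)]
  abel

variable (s : Idx N) (w : Fin (N + 1) → ℂ) (z : g)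

theorem torLeibniz_ggg (hinv : ∀ x y z : g, B ⁅x, y⁆ z = B x ⁅y, z⁆) :
    TorLeibniz B μ ν (gGen N g r x) (gGen N g m y) (gGen N g s z) := by
  have h : B y ⁅x, z⁆ = -B x ⁅y, z⁆ := by
    rw [← hinv, ← hinv, ← lie_skew, map_neg, LinearMap.neg_apply]
  simp only [TorLeibniz, torBracket_gg, torBracket_gk, torBracket_kg, map_add, map_smul,
    LinearMap.add_apply, LinearMap.smul_apply, add_assoc r m s, add_left_comm m r s, Idx.vec_add,
    hinv, h, leibniz_lie x y z]
  module

theorem torLeibniz_dgg :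
    TorLeibniz B μ ν (dGen N g r u) (gGen N g m y) (gGen N g s z) := by
  simp only [TorLeibniz, torBracket_gg, torBracket_dk, torBracket_dg, map_add, map_smul,
    LinearMap.smul_apply, add_assoc r m s, add_left_comm m r s, Idx.vec_add,
    add_dotProduct, dotProduct_comm u, kGen_vec_of_add_add]
  module

theorem torLeibniz_ddg :
    TorLeibniz B μ ν (dGen N g r u) (dGen N g m v) (gGen N g s z) := by
  simp only [TorLeibniz, torBracket_dd, torBracket_kg, torBracket_dg, map_add, map_sub, map_smul,
    LinearMap.add_apply, LinearMap.sub_apply, LinearMap.smul_apply, add_assoc r m s,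
    add_left_comm m r s, Idx.vec_add, add_dotProduct]
  module

theorem torLeibniz_ddk :
    TorLeibniz B μ ν (dGen N g r u) (dGen N g m v) (kGen N g s w) := by
  simp only [TorLeibniz, torBracket_dd, torBracket_kk, torBracket_dk, map_add, map_sub, map_smul,
    LinearMap.add_apply, LinearMap.sub_apply, LinearMap.smul_apply, add_assoc r m s,
    add_left_comm m r s, Idx.vec_add, add_dotProduct, dotProduct_comm u m.vec,
    dotProduct_comm v r.vec, kGen_vec_of_add_add]
  module

theorem torLeibniz_ddd :
    TorLeibniz B μ ν (dGen N g r u) (dGen N g m v) (dGen N g s w) := by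
  simp only [TorLeibniz, torBracket_dd, torBracket_dk, torBracket_kd, map_add, map_sub, map_smul,
    LinearMap.add_apply, LinearMap.sub_apply, LinearMap.smul_apply, add_assoc r m s,
    add_left_comm m r s, add_comm s (r + m), Idx.vec_add, add_dotProduct,
    dotProduct_comm u s.vec, dotProduct_comm v s.vec, dotProduct_comm w m.vec,
    kGen_vec_of_add_add]
  module

theorem TorLeibniz.rotate (hB : ∀ x y : g, B x y = B y x) {X Y Z : Carrier N g}
    (h : TorLeibniz B μ ν X Y Z) : TorLeibniz B μ ν Z X Y :=
  (h.swap_right hB).swap_left hB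

theorem TorLeibniz.add {X Y Z Z' : Carrier N g} (h : TorLeibniz B μ ν X Y Z)
    (h' : TorLeibniz B μ ν X Y Z') : TorLeibniz B μ ν X Y (Z + Z') := by
  unfold TorLeibniz at *
  simp only [map_add, h, h']
  abel

theorem TorLeibniz.add_mid (hB : ∀ x y : g, B x y = B y x) {X Y Y' Z : Carrier N g}
    (h : TorLeibniz B μ ν X Y Z) (h' : TorLeibniz B μ ν X Y' Z) : TorLeibniz B μ ν X (Y + Y') Z :=
  ((h.swap_right hB).add (h'.swap_right hB)).swap_right hB

theorem TorLeibniz.add_left (hB : ∀ x y : g, B x y = B y x) {X X' Y Z : Carrier N g}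
    (h : TorLeibniz B μ ν X Y Z) (h' : TorLeibniz B μ ν X' Y Z) : TorLeibniz B μ ν (X + X') Y Z :=
  ((h.swap_left hB).add_mid hB (h'.swap_left hB)).swap_left hB

theorem torLeibniz_right_k (hB : ∀ x y : g, B x y = B y x) (X Y : Carrier N g) :
    TorLeibniz B μ ν X Y (kGen N g s w) := by
  induction X using carrier_induction with
  | add X X' h h' => exact h.add_left hB h'
  | hg r x =>
    induction Y using carrier_induction with
    | add Y Y' h h' => exact h.add_mid hB h'
    | _ => simp [TorLeibniz, torBracket_gg, torBracket_gk, torBracket_gd, torBracket_kk,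
        torBracket_dk]
  | hk r u =>
    induction Y using carrier_induction with
    | add Y Y' h h' => exact h.add_mid hB h'
    | _ => simp [TorLeibniz, torBracket_kg, torBracket_gk, torBracket_kd, torBracket_kk,
        torBracket_dk]
  | hd r u =>
    induction Y using carrier_induction with
    | add Y Y' h h' => exact h.add_mid hB h'
    | hd m v => exact torLeibniz_ddk r m u v s w
    | _ => simp [TorLeibniz, torBracket_dg, torBracket_gk, torBracket_dk, torBracket_kk]

theorem torLeibniz_right_g (hB : ∀ x y : g, B x y = B y x)
    (hinv : ∀ x y z : g, B ⁅x, y⁆ z = B x ⁅y, z⁆) (X Y : Carrier N g) :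
    TorLeibniz B μ ν X Y (gGen N g s z) := by
  induction X using carrier_induction with
  | add X X' h h' => exact h.add_left hB h'
  | hk r u => exact (torLeibniz_right_k r u hB Y _).rotate hB
  | hg r x =>
    induction Y using carrier_induction with
    | add Y Y' h h' => exact h.add_mid hB h'
    | hg m y => exact torLeibniz_ggg r m x y s z hinv
    | hk m v => exact (torLeibniz_right_k m v hB _ _).swap_right hB
    | hd m v => exact (torLeibniz_dgg m r v x s z).swap_left hB
  | hd r u =>
    induction Y using carrier_induction with
    | add Y Y' h h' => exact h.add_mid hB h'
    | hg m y => exact torLeibniz_dgg r m u y s z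
    | hk m v => exact (torLeibniz_right_k m v hB _ _).swap_right hB
    | hd m v => exact torLeibniz_ddg r m u v s z

/-- The Jacobi identity for the toroidal bracket. -/
theorem torLeibniz (hB : ∀ x y : g, B x y = B y x)
    (hinv : ∀ x y z : g, B ⁅x, y⁆ z = B x ⁅y, z⁆) (X Y Z : Carrier N g) :
    TorLeibniz B μ ν X Y Z := by
  induction Z using carrier_induction with
  | add Z Z' h h' => exact h.add h'
  | hg s z => exact torLeibniz_right_g s z hB hinv X Y
  | hk s w => exact torLeibniz_right_k s w hB X Y
  | hd s w =>
    induction X using carrier_induction with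
    | add X X' h h' => exact h.add_left hB h'
    | hg r x => exact (torLeibniz_right_g r x hB hinv Y _).rotate hB
    | hk r u => exact (torLeibniz_right_k r u hB Y _).rotate hB
    | hd r u =>
      induction Y using carrier_induction with
      | add Y Y' h h' => exact h.add_mid hB h'
      | hg m y => exact (torLeibniz_right_g m y hB hinv _ _).swap_right hB
      | hk m v => exact (torLeibniz_right_k m v hB _ _).swap_right hB
      | hd m v => exact torLeibniz_ddd r m u v s w

theorem sum_smul_kGen (c : Fin (N + 1) → ℂ) :
    ∑ p, c p • kGen N g r (Pi.single p 1) = kGen N g r c := by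
  simp only [← map_smul, ← map_sum]
  congr 1
  ext q
  simp [Finset.sum_apply, Pi.single_apply]

end Bracket

theorem statement0 (N : ℕ) (hN : 1 ≤ N) (g : Type) [LieRing g] [LieAlgebra ℂ g]
    [FiniteDimensional ℂ g] [LieAlgebra.IsSimple ℂ g]
    (B : g →ₗ[ℂ] g →ₗ[ℂ] ℂ)
    (hBsymm : ∀ x y : g, B x y = B y x)
    (hBnondeg : ∀ x : g, (∀ y : g, B x y = 0) → x = 0)
    (hBinv : ∀ x y z : g, B ⁅x, y⁆ z = B x ⁅y, z⁆)
    (μ ν : ℂ) :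
    ∃ T : Tor N g, T.IsToroidal B μ ν := by
  let L : LieRing (Carrier N g) := lieRingOfBilin (torBracket B μ ν)
    (torBracket_self B μ ν hBsymm)
    (torLeibniz hBsymm hBinv)
  let : LieAlgebra ℂ (Carrier N g) :=
    { lie_smul := fun c X Y => map_smul (torBracket B μ ν X) c Y }
  let T : Tor N g := { G := Carrier N g, e := LinearEquiv.refl ℂ _ }
  have hs (r m : Idx N) : T.kSum r m = kGen N g (r + m) r.vec :=
    sum_smul_kGen (r + m) r.vec
  refine ⟨T, fun r m x y => ?_, fun r m p x => ?_, fun r m p q => ?_, fun r m a x => ?_,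
    fun r m a b => ?_, fun r m a b => ?_⟩
  · rw [hs]
    exact torBracket_gg B μ ν r m x y
  · exact torBracket_kg B μ ν m r _ x
  · exact torBracket_kk B μ ν r m _ _
  · refine (torBracket_dg B μ ν r m _ x).trans ?_
    rw [dotProduct_single_one]
    rfl
  · rw [hs]
    refine (torBracket_dk B μ ν r m _ _).trans ?_
    rw [dotProduct_single_one, single_one_dotProduct, map_add, map_smul, map_smul]
    simp only [Pi.single_apply]
    rfl
  · rw [show (∑ p, (m p : ℂ) • T.k (r + m) p) = kGen N g (r + m) m.vec from
      sum_smul_kGen (r + m) m.vec]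
    refine (torBracket_dd B μ ν r m _ _).trans ?_
    simp only [dotProduct_single_one, map_sub, map_smul]
    rfl

end ToroidalPaper
end

section
/- Let ḟ be a Lie algebra over ℂ, let Z₁ and Z₂ be complex vector spaces, let φ: ḟ × ḟ → Z₁ be a symmetric bilinear map satisfying the invariance φ([x,y],z) = φ(x,[y,z]) for all x,y,z ∈ ḟ, and let ψ: ḟ → Z₂ be a linear map vanishing on [ḟ,ḟ]. Then on the vector space f = (⊕_{n∈ℤ} ℂL(n)) ⊕ (ℂ[t₀,t₀^{-1}]⊗ḟ) ⊕ Z₁ ⊕ Z₂ ⊕ ℂC_Vir, the bracket defined by [L(n),L(m)] = (n−m)L(n+m) + ((n³−n)/12)δ_{n,−m}C_Vir, [L(n), f(m)] = −m f(n+m) − (n²+n)δ_{n,−m}ψ(f), [f(n), g(m)] = [f,g](n+m) + n δ_{n,−m}φ(f,g), with Z₁ ⊕ Z₂ ⊕ ℂC_Vir central (here f(n) denotes t₀^n⊗f for f ∈ ḟ, n ∈ ℤ), is alternating and satisfies the Jacobi identity; hence f is a Lie algebra, and it is a central extension of the semidirect product ˜f = Der ℂ[t₀,t₀^{-1}] ⋉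 (ℂ[t₀,t₀^{-1}]⊗ḟ), where L(n) corresponds to −t₀^{n+1} d/dt₀. -/
/-!
STATEMENT 8: the bracket of the twisted Virasoro-affine algebra
f = (⊕ₙ ℂL(n)) ⊕ (ℂ[t₀,t₀⁻¹]⊗ḟ) ⊕ Z₁ ⊕ Z₂ ⊕ ℂC_Vir is alternating and
satisfies the Jacobi identity, so f is a Lie algebra; moreover f is a central
extension of ˜f = Der ℂ[t₀,t₀⁻¹] ⋉ (ℂ[t₀,t₀⁻¹]⊗ḟ).
-/

namespace ToroidalPaper8

noncomputable section

variable (fdot Z1 Z2 : Type) [LieRing fdot] [LieAlgebra ℂ fdot]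
  [AddCommGroup Z1] [Module ℂ Z1] [AddCommGroup Z2] [Module ℂ Z2]

/-- A realization of the vector space
f = (⊕_{n∈ℤ} ℂL(n)) ⊕ (ℂ[t₀,t₀⁻¹]⊗ḟ) ⊕ Z₁ ⊕ Z₂ ⊕ ℂC_Vir as a Lie algebra. -/
structure VAAlg where
  F : Type
  [instLieRing : LieRing F]
  [instLieAlgebra : LieAlgebra ℂ F]
  e : F ≃ₗ[ℂ] (ℤ →₀ ℂ) × (ℤ →₀ fdot) × Z1 × Z2 × ℂ

attribute [instance] VAAlg.instLieRing VAAlg.instLieAlgebra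

namespace VAAlg

variable {fdot Z1 Z2}
variable [LieRing fdot] [LieAlgebra ℂ fdot] [AddCommGroup Z1] [Module ℂ Z1]
  [AddCommGroup Z2] [Module ℂ Z2] (A : VAAlg fdot Z1 Z2)

/-- the Virasoro generator L(n) = −t₀^{n+1} d/dt₀ -/
def L (n : ℤ) : A.F := A.e.symm (Finsupp.single n 1, 0, 0, 0, 0)

/-- the loop element f(n) = t₀^n ⊗ f -/
def af (n : ℤ) (f : fdot) : A.F := A.e.symm (0, Finsupp.single n f, 0, 0, 0)

/-- the central elements coming from Z₁ = S²(ḟ)^inv -/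
def z1 (z : Z1) : A.F := A.e.symm (0, 0, z, 0, 0)

/-- the central elements coming from Z₂ = ḟ^inv -/
def z2 (z : Z2) : A.F := A.e.symm (0, 0, 0, z, 0)

/-- the Virasoro central element C_Vir -/
def CVir : A.F := A.e.symm (0, 0, 0, 0, 1)

/-- The twisted Virasoro-affine bracket relations (3.12)-(3.14). -/
structure IsVA (φ : fdot →ₗ[ℂ] fdot →ₗ[ℂ] Z1) (ψ : fdot →ₗ[ℂ] Z2) : Prop where
  br_LL : ∀ n m : ℤ,
    ⁅A.L n, A.L m⁆ = ((n - m : ℤ) : ℂ) • A.L (n + m)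
      + (if n + m = 0 then ((n : ℂ) ^ 3 - (n : ℂ)) / 12 else 0) • A.CVir
  br_Lf : ∀ (n m : ℤ) (f : fdot),
    ⁅A.L n, A.af m f⁆ = (-(m : ℂ)) • A.af (n + m) f
      - (if n + m = 0 then ((n : ℂ) ^ 2 + (n : ℂ)) else 0) • A.z2 (ψ f)
  br_ff : ∀ (n m : ℤ) (f h : fdot),
    ⁅A.af n f, A.af m h⁆ = A.af (n + m) ⁅f, h⁆
      + (if n + m = 0 then (n : ℂ) else 0) • A.z1 (φ f h)
  central_z1 : ∀ (z : Z1) (x : A.F), ⁅A.z1 z, x⁆ = 0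
  central_z2 : ∀ (z : Z2) (x : A.F), ⁅A.z2 z, x⁆ = 0
  central_CVir : ∀ x : A.F, ⁅A.CVir, x⁆ = 0

end VAAlg

/-- A realization of ˜f = Der ℂ[t₀,t₀⁻¹] ⋉ (ℂ[t₀,t₀⁻¹]⊗ḟ) as a Lie algebra,
with L(n) corresponding to −t₀^{n+1}d/dt₀. -/
structure TfAlg where
  F : Type
  [instLieRing : LieRing F]
  [instLieAlgebra : LieAlgebra ℂ F]
  e : F ≃ₗ[ℂ] (ℤ →₀ ℂ) × (ℤ →₀ fdot)

attribute [instance] TfAlg.instLieRing TfAlg.instLieAlgebra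

namespace TfAlg

variable {fdot}
variable [LieRing fdot] [LieAlgebra ℂ fdot] (A : TfAlg fdot)

/-- L(n) = −t₀^{n+1}d/dt₀ ∈ Der ℂ[t₀,t₀⁻¹] -/
def L (n : ℤ) : A.F := A.e.symm (Finsupp.single n 1, 0)

/-- f(n) = t₀^n ⊗ f -/
def af (n : ℤ) (f : fdot) : A.F := A.e.symm (0, Finsupp.single n f)

/-- the bracket relations of the semidirect product
˜f = Der ℂ[t₀,t₀⁻¹] ⋉ (ℂ[t₀,t₀⁻¹]⊗ḟ) -/
structure IsTf : Prop where
  br_LL : ∀ n m : ℤ, ⁅A.L n, A.L m⁆ = ((n - m : ℤ) : ℂ) • A.L (n + m)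
  br_Lf : ∀ (n m : ℤ) (f : fdot), ⁅A.L n, A.af m f⁆ = (-(m : ℂ)) • A.af (n + m) f
  br_ff : ∀ (n m : ℤ) (f h : fdot), ⁅A.af n f, A.af m h⁆ = A.af (n + m) ⁅f, h⁆

end TfAlg

section Pairing

theorem prod_finsupp_induction {𝔤 : Type} [AddCommGroup 𝔤]
    {p : (ℤ →₀ ℂ) × (ℤ →₀ 𝔤) → Prop}
    (add : ∀ x y, p x → p y → p (x + y))
    (vir : ∀ n r, p (Finsupp.single n r, 0)) (loop : ∀ n f, p (0, Finsupp.single n f)) (x) :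
    p x := by
  have h₁ : ∀ u : ℤ →₀ ℂ, p (u, 0) := fun u => by
    induction u using Finsupp.induction_linear with
    | zero => simpa using vir 0 0
    | add u v hu hv => simpa using add _ _ hu hv
    | single n r => exact vir n r
  have h₂ : ∀ v : ℤ →₀ 𝔤, p (0, v) := fun v => by
    induction v using Finsupp.induction_linear with
    | zero => simpa using loop 0 0
    | add u v hu hv => simpa using add _ _ hu hv
    | single n f => exact loop n f
  simpa using add _ _ (h₁ x.1) (h₂ x.2)

variable {𝔤 W : Type} [AddCommGroup 𝔤] [Module ℂ 𝔤] [AddCommGroup W] [Module ℂ W]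

/-- The skew-symmetrically arranged bilinear map on `(⊕ₙ ℂL(n)) ⊕ (ℂ[t,t⁻¹] ⊗ 𝔤)` with values
`a n m` on `(L(n), L(m))`, `b n m f` on `(L(n), f(m))`, `-b n m f` on `(f(m), L(n))` and
`c n m f g` on `(f(n), g(m))`. -/
def pairing (a : ℤ → ℤ → W) (b : ℤ → ℤ → 𝔤 →ₗ[ℂ] W) (c : ℤ → ℤ → 𝔤 →ₗ[ℂ] 𝔤 →ₗ[ℂ] W) :
    (ℤ →₀ ℂ) × (ℤ →₀ 𝔤) →ₗ[ℂ] (ℤ →₀ ℂ) × (ℤ →₀ 𝔤) →ₗ[ℂ] W :=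
  let LL : (ℤ →₀ ℂ) →ₗ[ℂ] (ℤ →₀ ℂ) →ₗ[ℂ] W := Finsupp.lsum ℂ fun n =>
    LinearMap.toSpanSingleton ℂ _ (Finsupp.lsum ℂ fun m => LinearMap.toSpanSingleton ℂ _ (a n m))
  let Lf : (ℤ →₀ ℂ) →ₗ[ℂ] (ℤ →₀ 𝔤) →ₗ[ℂ] W := Finsupp.lsum ℂ fun n =>
    LinearMap.toSpanSingleton ℂ _ (Finsupp.lsum ℂ fun m => b n m)
  let ff : (ℤ →₀ 𝔤) →ₗ[ℂ] (ℤ →₀ 𝔤) →ₗ[ℂ] W := Finsupp.lsum ℂ fun n =>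
    LinearMap.flip (Finsupp.lsum ℂ fun m => (c n m).flip)
  let p := LinearMap.fst ℂ (ℤ →₀ ℂ) (ℤ →₀ 𝔤)
  let q := LinearMap.snd ℂ (ℤ →₀ ℂ) (ℤ →₀ 𝔤)
  LL.compl₁₂ p p + Lf.compl₁₂ p q - (Lf.compl₁₂ p q).flip + ff.compl₁₂ q q

variable (a : ℤ → ℤ → W) (b : ℤ → ℤ → 𝔤 →ₗ[ℂ] W) (c : ℤ → ℤ → 𝔤 →ₗ[ℂ] 𝔤 →ₗ[ℂ] W)

@[simp]
theorem pairing_single_single (n m : ℤ) (r s : ℂ) :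
    pairing a b c (Finsupp.single n r, 0) (Finsupp.single m s, 0) = (r * s) • a n m := by
  simp [pairing, mul_smul]

@[simp]
theorem pairing_single_loop (n m : ℤ) (r : ℂ) (f : 𝔤) :
    pairing a b c (Finsupp.single n r, 0) (0, Finsupp.single m f) = r • b n m f := by
  simp [pairing]

@[simp]
theorem pairing_loop_single (n m : ℤ) (r : ℂ) (f : 𝔤) :
    pairing a b c (0, Finsupp.single m f) (Finsupp.single n r, 0) = -(r • b n m f) := by
  simp [pairing]

@[simp]
theorem pairing_loop_loop (n m : ℤ) (f g : 𝔤) :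
    pairing a b c (0, Finsupp.single n f) (0, Finsupp.single m g) = c n m f g := by
  simp [pairing]

variable {a b c}

theorem pairing_self (ha : ∀ n m, a n m = -a m n) (hc : ∀ n m f g, c n m f g = -c m n g f)
    (x : (ℤ →₀ ℂ) × (ℤ →₀ 𝔤)) : pairing a b c x x = 0 := by
  have skew : ∀ x y, pairing a b c x y = -pairing a b c y x := by
    intro x y
    induction x using prod_finsupp_induction with
    | add x x' h h' => simp only [map_add, LinearMap.add_apply, h, h', neg_add]
    | vir n r =>
      induction y using prod_finsupp_induction with
      | add y y' h h' => simp only [map_add, LinearMap.add_apply, h, h', neg_add]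
      | vir m s => simp [ha n m, mul_comm]
      | loop m f => simp
    | loop n f =>
      induction y using prod_finsupp_induction with
      | add y y' h h' => simp only [map_add, LinearMap.add_apply, h, h', neg_add]
      | vir m s => simp
      | loop m g => simpa using hc n m f g
  have : IsAddTorsionFree W := .of_isTorsionFree ℂ W
  exact self_eq_neg.mp (skew x x)

/-- The cyclic Jacobi sum of two bilinear maps vanishes as soon as it does so on the generators. -/
theorem cyclic_sum_eq_zero
    (B : (ℤ →₀ ℂ) × (ℤ →₀ 𝔤) →ₗ[ℂ] (ℤ →₀ ℂ) × (ℤ →₀ 𝔤) →ₗ[ℂ] (ℤ →₀ ℂ) × (ℤ →₀ 𝔤))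
    (ω : (ℤ →₀ ℂ) × (ℤ →₀ 𝔤) →ₗ[ℂ] (ℤ →₀ ℂ) × (ℤ →₀ 𝔤) →ₗ[ℂ] W)
    (J : (ℤ →₀ ℂ) × (ℤ →₀ 𝔤) → (ℤ →₀ ℂ) × (ℤ →₀ 𝔤) → (ℤ →₀ ℂ) × (ℤ →₀ 𝔤) → W)
    (hJ : J = fun x y z => ω x (B y z) + ω y (B z x) + ω z (B x y))
    (hLLL : ∀ n m k r s t,
      J (Finsupp.single n r, 0) (Finsupp.single m s, 0) (Finsupp.single k t, 0) = 0)
    (hLLf : ∀ n m k r s f,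
      J (Finsupp.single n r, 0) (Finsupp.single m s, 0) (0, Finsupp.single k f) = 0)
    (hLff : ∀ n m k r f g,
      J (Finsupp.single n r, 0) (0, Finsupp.single m f) (0, Finsupp.single k g) = 0)
    (hfff : ∀ n m k f g h,
      J (0, Finsupp.single n f) (0, Finsupp.single m g) (0, Finsupp.single k h) = 0)
    (x y z) : J x y z = 0 := by
  have cyc : ∀ x y z, J x y z = J y z x := fun x y z => by simp only [hJ]; abel
  have add : ∀ x x' y z, J (x + x') y z = J x y z + J x' y z := fun x x' y z => by
    simp only [hJ, map_add, LinearMap.add_apply]; abel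
  induction x using prod_finsupp_induction with
  | add x x' h h' => rw [add, h, h', add_zero]
  | vir n r =>
    rw [cyc]
    induction y using prod_finsupp_induction with
    | add y y' h h' => rw [add, h, h', add_zero]
    | vir m s =>
      rw [cyc]
      induction z using prod_finsupp_induction with
      | add z z' h h' => rw [add, h, h', add_zero]
      | vir k t => exact hLLL ..
      | loop k f => rw [cyc]; exact hLLf ..
    | loop m f =>
      rw [cyc]
      induction z using prod_finsupp_induction with
      | add z z' h h' => rw [add, h, h', add_zero]
      | vir k t => exact hLLf ..
      | loop k g => rw [cyc]; exact hLff ..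
  | loop n f =>
    rw [cyc]
    induction y using prod_finsupp_induction with
    | add y y' h h' => rw [add, h, h', add_zero]
    | vir m s =>
      rw [cyc]
      induction z using prod_finsupp_induction with
      | add z z' h h' => rw [add, h, h', add_zero]
      | vir k t => rw [cyc, cyc]; exact hLLf ..
      | loop k g => rw [cyc, cyc]; exact hLff ..
    | loop m g =>
      rw [cyc]
      induction z using prod_finsupp_induction with
      | add z z' h h' => rw [add, h, h', add_zero]
      | vir k t => exact hLff ..
      | loop k h => exact hfff ..

end Pairing

section CentralExtension

/-- The Lie ring structure given by an alternating bilinear map whose cyclic Jacobi sum vanishes. -/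
abbrev lieRingOfBilin {V : Type} [AddCommGroup V] [Module ℂ V] (B : V →ₗ[ℂ] V →ₗ[ℂ] V)
    (alt : ∀ x, B x x = 0) (jac : ∀ x y z, B x (B y z) + B y (B z x) + B z (B x y) = 0) :
    LieRing V where
  bracket x y := B x y
  add_lie x y z := by simp
  lie_add x y z := by simp
  lie_self x := alt x
  leibniz_lie x y z := by
    have skew : ∀ u v, B u v = -B v u := fun u v => by
      have h := alt (u + v)
      simp only [map_add, LinearMap.add_apply, alt, zero_add, add_zero] at h
      exact eq_neg_of_add_eq_zero_right h
    have h := jac x y z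
    change B x (B y z) = B (B x y) z + B y (B x z)
    rw [skew (B x y) z, skew x z, map_neg, ← sub_eq_zero, ← h]
    abel

/-- The Lie algebra structure on top of `lieRingOfBilin`. -/
abbrev lieAlgebraOfBilin {V : Type} [AddCommGroup V] [Module ℂ V] (B : V →ₗ[ℂ] V →ₗ[ℂ] V)
    (alt : ∀ x, B x x = 0) (jac : ∀ x y z, B x (B y z) + B y (B z x) + B z (B x y) = 0) :
    letI := lieRingOfBilin B alt jac
    LieAlgebra ℂ V :=
  letI := lieRingOfBilin B alt jac
  { lie_smul := fun t x y => (B x).map_smul t y }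

variable {U Z : Type} [AddCommGroup U] [Module ℂ U] [AddCommGroup Z] [Module ℂ Z]

/-- The bracket `[(u, z), (u', z')] = (B u u', ω u u')` on `U × Z`. -/
def extensionBracket (B : U →ₗ[ℂ] U →ₗ[ℂ] U) (ω : U →ₗ[ℂ] U →ₗ[ℂ] Z) :
    U × Z →ₗ[ℂ] U × Z →ₗ[ℂ] U × Z :=
  ((B.compr₂ (LinearMap.inl ℂ U Z)) + (ω.compr₂ (LinearMap.inr ℂ U Z))).compl₁₂
    (LinearMap.fst ℂ U Z) (LinearMap.fst ℂ U Z)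

@[simp]
theorem extensionBracket_apply (B : U →ₗ[ℂ] U →ₗ[ℂ] U) (ω : U →ₗ[ℂ] U →ₗ[ℂ] Z) (x y : U × Z) :
    extensionBracket B ω x y = (B x.1 y.1, ω x.1 y.1) := by
  simp [extensionBracket]

variable {B : U →ₗ[ℂ] U →ₗ[ℂ] U} {ω : U →ₗ[ℂ] U →ₗ[ℂ] Z}

theorem extensionBracket_self (hB : ∀ x, B x x = 0) (hω : ∀ x, ω x x = 0) (x : U × Z) :
    extensionBracket B ω x x = 0 := by
  simp [hB, hω]

theorem extensionBracket_jacobi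
    (hB : ∀ x y z, B x (B y z) + B y (B z x) + B z (B x y) = 0)
    (hω : ∀ x y z, ω x (B y z) + ω y (B z x) + ω z (B x y) = 0) (x y z : U × Z) :
    extensionBracket B ω x (extensionBracket B ω y z) +
      extensionBracket B ω y (extensionBracket B ω z x) +
      extensionBracket B ω z (extensionBracket B ω x y) = 0 := by
  simp [hB, hω]

theorem extensionBracket_eq_zero (x y : U × Z) (hx : x.1 = 0) : extensionBracket B ω x y = 0 := by
  simp [hx]

end CentralExtension

section Brackets

variable (𝔤 : Type) [LieRing 𝔤] [LieAlgebra ℂ 𝔤]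

/-- The bracket of `Der ℂ[t,t⁻¹] ⋉ (ℂ[t,t⁻¹] ⊗ 𝔤)`. -/
def semidirectBracket :
    (ℤ →₀ ℂ) × (ℤ →₀ 𝔤) →ₗ[ℂ] (ℤ →₀ ℂ) × (ℤ →₀ 𝔤) →ₗ[ℂ] (ℤ →₀ ℂ) × (ℤ →₀ 𝔤) :=
  pairing (fun n m => (Finsupp.single (n + m) ((n : ℂ) - m), 0))
    (fun n m => (-(m : ℂ)) • LinearMap.inr ℂ _ _ ∘ₗ Finsupp.lsingle (n + m))
    (fun n m => (LieModule.toEnd ℂ 𝔤 𝔤 : 𝔤 →ₗ[ℂ] Module.End ℂ 𝔤).compr₂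
      (LinearMap.inr ℂ _ _ ∘ₗ Finsupp.lsingle (n + m)))

@[simp]
theorem semidirectBracket_single_single (n m : ℤ) (r s : ℂ) :
    semidirectBracket 𝔤 (Finsupp.single n r, 0) (Finsupp.single m s, 0) =
      (Finsupp.single (n + m) (r * s * (n - m)), 0) := by
  simp [semidirectBracket, -Finsupp.single_sub]

@[simp]
theorem semidirectBracket_single_loop (n m : ℤ) (r : ℂ) (f : 𝔤) :
    semidirectBracket 𝔤 (Finsupp.single n r, 0) (0, Finsupp.single m f) =
      (0, Finsupp.single (n + m) (-(r * m) • f)) := by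
  simp [semidirectBracket, mul_smul]

@[simp]
theorem semidirectBracket_loop_single (n m : ℤ) (r : ℂ) (f : 𝔤) :
    semidirectBracket 𝔤 (0, Finsupp.single m f) (Finsupp.single n r, 0) =
      (0, Finsupp.single (n + m) ((r * m) • f)) := by
  simp [semidirectBracket, mul_smul]

@[simp]
theorem semidirectBracket_loop_loop (n m : ℤ) (f g : 𝔤) :
    semidirectBracket 𝔤 (0, Finsupp.single n f) (0, Finsupp.single m g) =
      (0, Finsupp.single (n + m) ⁅f, g⁆) := by
  simp [semidirectBracket]

theorem semidirectBracket_self (x) : semidirectBracket 𝔤 x x = 0 := by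
  refine pairing_self (fun n m => ?_) (fun n m f g => ?_) x
  · simp [add_comm m n]
  · simp [add_comm m n, ← Finsupp.single_neg]

theorem semidirectBracket_jacobi (x y z) :
    semidirectBracket 𝔤 x (semidirectBracket 𝔤 y z) + semidirectBracket 𝔤 y
      (semidirectBracket 𝔤 z x) + semidirectBracket 𝔤 z (semidirectBracket 𝔤 x y) = 0 := by
  refine cyclic_sum_eq_zero _ _ _ rfl ?_ ?_ ?_ ?_ x y z
  · intro n m k r s t
    simp only [semidirectBracket_single_single, Prod.mk_add_mk, add_zero]
    rw [show m + (k + n) = n + (m + k) by ring, show k + (n + m) = n + (m + k) by ring,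
      ← Finsupp.single_add, ← Finsupp.single_add, Prod.mk_eq_zero, Finsupp.single_eq_zero]
    refine ⟨?_, rfl⟩
    push_cast
    ring
  · intro n m k r s f
    simp only [semidirectBracket_single_single, semidirectBracket_single_loop,
      semidirectBracket_loop_single, Prod.mk_add_mk, add_zero]
    rw [show m + (n + k) = n + (m + k) by ring, show n + m + k = n + (m + k) by ring,
      ← Finsupp.single_add, ← Finsupp.single_add, Prod.mk_eq_zero, Finsupp.single_eq_zero]
    refine ⟨rfl, ?_⟩
    push_cast
    module
  · intro n m k r f g
    simp only [semidirectBracket_loop_loop, semidirectBracket_single_loop,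
      semidirectBracket_loop_single, Prod.mk_add_mk, add_zero]
    rw [show m + (n + k) = n + (m + k) by ring, show k + (n + m) = n + (m + k) by ring,
      ← Finsupp.single_add, ← Finsupp.single_add, Prod.mk_eq_zero, Finsupp.single_eq_zero]
    refine ⟨rfl, ?_⟩
    rw [lie_smul, lie_smul, ← lie_skew f g]
    push_cast
    module
  · intro n m k f g h
    simp only [semidirectBracket_loop_loop, Prod.mk_add_mk, add_zero]
    rw [show m + (k + n) = n + (m + k) by ring, show k + (n + m) = n + (m + k) by ring,
      ← Finsupp.single_add, ← Finsupp.single_add, lie_jacobi, Finsupp.single_zero, Prod.mk_zero_zero]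

variable {𝔤} {Z1 Z2 : Type} [AddCommGroup Z1] [Module ℂ Z1] [AddCommGroup Z2] [Module ℂ Z2]
  (φ : 𝔤 →ₗ[ℂ] 𝔤 →ₗ[ℂ] Z1) (ψ : 𝔤 →ₗ[ℂ] Z2)

/-- The 2-cocycle of the twisted Virasoro-affine algebra. -/
def virasoroAffineCocycle :
    (ℤ →₀ ℂ) × (ℤ →₀ 𝔤) →ₗ[ℂ] (ℤ →₀ ℂ) × (ℤ →₀ 𝔤) →ₗ[ℂ] Z1 × Z2 × ℂ :=
  pairing (fun n m => (0, 0, if n + m = 0 then ((n : ℂ) ^ 3 - n) / 12 else 0))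
    (fun n m => (-(if n + m = 0 then (n : ℂ) ^ 2 + n else 0)) •
      LinearMap.inr ℂ _ _ ∘ₗ LinearMap.inl ℂ _ _ ∘ₗ ψ)
    (fun n m => (if n + m = 0 then (n : ℂ) else 0) • φ.compr₂ (LinearMap.inl ℂ _ _))

@[simp]
theorem virasoroAffineCocycle_single_single (n m : ℤ) (r s : ℂ) :
    virasoroAffineCocycle φ ψ (Finsupp.single n r, 0) (Finsupp.single m s, 0) =
      (0, 0, (if n + m = 0 then ((n : ℂ) ^ 3 - n) / 12 else 0) * (r * s)) := by
  simp [virasoroAffineCocycle, mul_comm]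

@[simp]
theorem virasoroAffineCocycle_single_loop (n m : ℤ) (r : ℂ) (f : 𝔤) :
    virasoroAffineCocycle φ ψ (Finsupp.single n r, 0) (0, Finsupp.single m f) =
      (0, (-(r * if n + m = 0 then (n : ℂ) ^ 2 + n else 0)) • ψ f, 0) := by
  simp only [virasoroAffineCocycle, pairing_single_loop]
  split_ifs <;> simp [mul_smul, -neg_add_rev, ← Prod.zero_eq_mk]

@[simp]
theorem virasoroAffineCocycle_loop_single (n m : ℤ) (r : ℂ) (f : 𝔤) :
    virasoroAffineCocycle φ ψ (0, Finsupp.single m f) (Finsupp.single n r, 0) =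
      (0, (r * if n + m = 0 then (n : ℂ) ^ 2 + n else 0) • ψ f, 0) := by
  simp only [virasoroAffineCocycle, pairing_loop_single]
  split_ifs <;> simp [mul_smul, -neg_add_rev, ← Prod.zero_eq_mk]

@[simp]
theorem virasoroAffineCocycle_loop_loop (n m : ℤ) (f g : 𝔤) :
    virasoroAffineCocycle φ ψ (0, Finsupp.single n f) (0, Finsupp.single m g) =
      ((if n + m = 0 then (n : ℂ) else 0) • φ f g, 0, 0) := by
  simp only [virasoroAffineCocycle, pairing_loop_loop]
  split_ifs <;> simp [← Prod.zero_eq_mk]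

variable {φ ψ}

theorem virasoroAffineCocycle_self (hφsymm : ∀ x y, φ x y = φ y x) (x) :
    virasoroAffineCocycle φ ψ x x = 0 := by
  refine pairing_self (fun n m => ?_) (fun n m f g => ?_) x
  · by_cases h : n + m = 0
    · obtain rfl := eq_neg_of_add_eq_zero_right h
      simp
      ring
    · simp [h, add_comm m n]
  · by_cases h : n + m = 0
    · obtain rfl := eq_neg_of_add_eq_zero_right h
      simp [hφsymm f g]
    · simp [h, add_comm m n]

theorem virasoroAffineCocycle_jacobi (hφsymm : ∀ x y, φ x y = φ y x)
    (hφinv : ∀ x y z : 𝔤, φ ⁅x, y⁆ z = φ x ⁅y, z⁆) (hψ : ∀ x y : 𝔤, ψ ⁅x, y⁆ = 0) (x y z) :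
    virasoroAffineCocycle φ ψ x (semidirectBracket 𝔤 y z) + virasoroAffineCocycle φ ψ y
      (semidirectBracket 𝔤 z x) + virasoroAffineCocycle φ ψ z (semidirectBracket 𝔤 x y) = 0 := by
  refine cyclic_sum_eq_zero _ _ _ rfl ?_ ?_ ?_ ?_ x y z
  · intro n m k r s t
    simp only [semidirectBracket_single_single, virasoroAffineCocycle_single_single,
      Prod.mk_add_mk, add_zero]
    rw [show m + (k + n) = n + (m + k) by ring, show k + (n + m) = n + (m + k) by ring]
    split_ifs with h
    · obtain rfl : n = -(m + k) := eq_neg_of_add_eq_zero_left h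
      refine Prod.ext rfl (Prod.ext rfl ?_)
      push_cast
      simp only [Prod.snd_zero]
      ring
    · simp
  · intro n m k r s f
    simp only [semidirectBracket_single_single, semidirectBracket_single_loop,
      semidirectBracket_loop_single, virasoroAffineCocycle_single_loop,
      virasoroAffineCocycle_loop_single, Prod.mk_add_mk, add_zero, map_smul]
    rw [show m + (n + k) = n + (m + k) by ring, show n + m + k = n + (m + k) by ring]
    split_ifs with h
    · obtain rfl : k = -(n + m) := by linarith
      refine Prod.ext rfl (Prod.ext ?_ rfl)
      push_cast
      simp only [Prod.fst_zero, Prod.snd_zero]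
      module
    · simp
  · intro n m k r f g
    simp only [semidirectBracket_loop_loop, semidirectBracket_single_loop,
      semidirectBracket_loop_single, virasoroAffineCocycle_single_loop,
      virasoroAffineCocycle_loop_loop, Prod.mk_add_mk, add_zero, map_smul, hψ, smul_zero]
    rw [show m + (n + k) = n + (m + k) by ring, show k + (n + m) = n + (m + k) by ring,
      hφsymm g f]
    split_ifs with h
    · refine Prod.ext ?_ rfl
      simp only [Prod.fst_zero]
      module
    · simp
  · intro n m k f g h
    simp only [semidirectBracket_loop_loop, virasoroAffineCocycle_loop_loop, Prod.mk_add_mk,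
      add_zero]
    rw [show m + (k + n) = n + (m + k) by ring, show k + (n + m) = n + (m + k) by ring,
      ← hφinv g h f, hφsymm ⁅g, h⁆ f, hφsymm h ⁅f, g⁆, hφinv f g h]
    split_ifs with hnmk
    · obtain rfl : n = -(m + k) := eq_neg_of_add_eq_zero_left hnmk
      refine Prod.ext ?_ rfl
      push_cast
      simp only [Prod.fst_zero]
      module
    · simp

variable (𝔤) in
/-- The semidirect product `Der ℂ[t,t⁻¹] ⋉ (ℂ[t,t⁻¹] ⊗ 𝔤)`. -/
def semidirectAlg : TfAlg 𝔤 where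
  F := (ℤ →₀ ℂ) × (ℤ →₀ 𝔤)
  instLieRing := lieRingOfBilin _ (semidirectBracket_self 𝔤) (semidirectBracket_jacobi 𝔤)
  instLieAlgebra := lieAlgebraOfBilin _ (semidirectBracket_self 𝔤) (semidirectBracket_jacobi 𝔤)
  e := LinearEquiv.refl ℂ _

/-- The twisted Virasoro-affine algebra, as the extension of `semidirectAlg` by
`virasoroAffineCocycle`. -/
def virasoroAffineAlg (φ : 𝔤 →ₗ[ℂ] 𝔤 →ₗ[ℂ] Z1) (ψ : 𝔤 →ₗ[ℂ] Z2) (hφsymm : ∀ x y, φ x y = φ y x)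
    (hφinv : ∀ x y z : 𝔤, φ ⁅x, y⁆ z = φ x ⁅y, z⁆) (hψ : ∀ x y : 𝔤, ψ ⁅x, y⁆ = 0) :
    VAAlg 𝔤 Z1 Z2 :=
  have alt := extensionBracket_self (semidirectBracket_self 𝔤)
    (virasoroAffineCocycle_self (ψ := ψ) hφsymm)
  have jac := extensionBracket_jacobi (semidirectBracket_jacobi 𝔤)
    (virasoroAffineCocycle_jacobi hφsymm hφinv hψ)
  { F := ((ℤ →₀ ℂ) × (ℤ →₀ 𝔤)) × Z1 × Z2 × ℂ
    instLieRing := lieRingOfBilin _ alt jac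
    instLieAlgebra := lieAlgebraOfBilin _ alt jac
    e := LinearEquiv.prodAssoc ℂ (ℤ →₀ ℂ) (ℤ →₀ 𝔤) (Z1 × Z2 × ℂ) }

end Brackets

/-- for a symmetric invariant Z₁-valued form φ and a linear map
ψ : ḟ → Z₂ vanishing on [ḟ,ḟ], the twisted Virasoro-affine bracket makes
f = (⊕ₙ ℂL(n)) ⊕ (ℂ[t₀,t₀⁻¹]⊗ḟ) ⊕ Z₁ ⊕ Z₂ ⊕ ℂC_Vir a Lie algebra, which is a
central extension of ˜f = Der ℂ[t₀,t₀⁻¹] ⋉ (ℂ[t₀,t₀⁻¹]⊗ḟ). -/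
theorem statement8 (fdot Z1 Z2 : Type) [LieRing fdot] [LieAlgebra ℂ fdot]
    [AddCommGroup Z1] [Module ℂ Z1] [AddCommGroup Z2] [Module ℂ Z2]
    (φ : fdot →ₗ[ℂ] fdot →ₗ[ℂ] Z1)
    (hφsymm : ∀ x y : fdot, φ x y = φ y x)
    (hφinv : ∀ x y z : fdot, φ ⁅x, y⁆ z = φ x ⁅y, z⁆)
    (ψ : fdot →ₗ[ℂ] Z2)
    (hψ : ∀ x y : fdot, ψ ⁅x, y⁆ = 0) :
    ∃ A : VAAlg fdot Z1 Z2, A.IsVA φ ψ ∧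
      -- f is a central extension of ˜f:
      ∃ (Tf : TfAlg fdot), Tf.IsTf ∧
        ∃ π : A.F →ₗ⁅ℂ⁆ Tf.F,
          Function.Surjective π ∧
          (∀ n : ℤ, π (A.L n) = Tf.L n) ∧
          (∀ (n : ℤ) (f : fdot), π (A.af n f) = Tf.af n f) ∧
          (∀ z : Z1, π (A.z1 z) = 0) ∧
          (∀ z : Z2, π (A.z2 z) = 0) ∧
          π A.CVir = 0 ∧
          (∀ x : A.F, π x = 0 → ∀ y : A.F, ⁅x, y⁆ = 0) := by
  let B := semidirectBracket fdot
  let ω := virasoroAffineCocycle φ ψ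
  let E := extensionBracket B ω
  have central : ∀ x y, x.1 = 0 → E x y = 0 := extensionBracket_eq_zero
  let π : (virasoroAffineAlg φ ψ hφsymm hφinv hψ).F →ₗ⁅ℂ⁆ (semidirectAlg fdot).F :=
    { toFun := fun x : ((ℤ →₀ ℂ) × (ℤ →₀ fdot)) × Z1 × Z2 × ℂ => x.1
      map_add' := fun _ _ => rfl
      map_smul' := fun _ _ => rfl
      map_lie' := fun {x y} => congrArg Prod.fst (extensionBracket_apply B ω x y) }
  refine ⟨virasoroAffineAlg φ ψ hφsymm hφinv hψ, ⟨?_, ?_, ?_, fun z x => central _ x rfl, fun z x => central _ x rfl,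
    fun x => central _ x rfl⟩, semidirectAlg fdot, ⟨?_, ?_, ?_⟩, π, fun u => ⟨(u, 0), rfl⟩, fun _ => rfl,
    fun _ _ => rfl, fun _ => rfl, fun _ => rfl, rfl, fun x hx y => central x y hx⟩
  · intro n m
    have h : E ((Finsupp.single n 1, 0), 0) ((Finsupp.single m 1, 0), 0) =
        ((n - m : ℤ) : ℂ) • ((Finsupp.single (n + m) 1, 0), 0) +
          (if n + m = 0 then ((n : ℂ) ^ 3 - (n : ℂ)) / 12 else 0) • ((0, 0), (0, 0, 1)) := by
      simp [E, B, ω, -Finsupp.single_sub, -ite_smul]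
    exact h
  · intro n m f
    have h : E ((Finsupp.single n 1, 0), 0) ((0, Finsupp.single m f), 0) =
        (-(m : ℂ)) • ((0, Finsupp.single (n + m) f), 0) -
          (if n + m = 0 then ((n : ℂ) ^ 2 + (n : ℂ)) else 0) • ((0, 0), (0, ψ f, 0)) := by
      simp [E, B, ω, -ite_smul]
    exact h
  · intro n m f g
    have h : E ((0, Finsupp.single n f), 0) ((0, Finsupp.single m g), 0) =
        ((0, Finsupp.single (n + m) ⁅f, g⁆), 0) +
          (if n + m = 0 then (n : ℂ) else 0) • ((0, 0), (φ f g, 0, 0)) := by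
      simp [E, B, ω, -ite_smul]
    exact h
  · intro n m
    have h : B (Finsupp.single n 1, 0) (Finsupp.single m 1, 0) =
        ((n - m : ℤ) : ℂ) • (Finsupp.single (n + m) 1, 0) := by
      simp [B, -Finsupp.single_sub]
    exact h
  · intro n m f
    have h : B (Finsupp.single n 1, 0) (0, Finsupp.single m f) =
        (-(m : ℂ)) • (0, Finsupp.single (n + m) f) := by
      simp [B]
    exact h
  · exact semidirectBracket_loop_loop fdot

end

end ToroidalPaper8
end
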